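/- Let R be a connected reduced order with universal grading (Γ, (R_γ)_{γ∈Γ}) and degree map d: μ(R) → Γ. Let Id₀(d) = {f ∈ Hom(Γ, μ(R)) : f∘d∘f = f}, partially ordered by f ≤ g if and only if f∘d∘g = f and g∘d∘f = f. Then the map Φ sending f ∈ Id₀(d) to the pair (⊕_{γ∈ker f} R_γ, f(Γ)) is well defined (i.e., Φ(f) ∈ GpRg(R) for every f ∈ Id₀(d)) and is an isomorphism of partially ordered sets from Id₀(d) onto GpRg(R). -/

import Mathlib

/-- The natural ring homomorphism `A[G] → R` for a subring `A ⊆ R` and a subgroup `G ⊆ Rˣ`. -/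
noncomputable def gpRgHom {R : Type*} [CommRing R] (A : Subring R) (G : Subgroup Rˣ) :
    MonoidAlgebra A G →+* R :=
  MonoidAlgebra.liftNCRingHom A.subtype ((Units.coeHom R).comp G.subtype)
    (fun _ _ => Commute.all _ _)

/-- `A[G] = R`: the natural map `A[G] → R` is a ring isomorphism. -/
def IsGpRg {R : Type*} [CommRing R] (A : Subring R) (G : Subgroup Rˣ) : Prop :=
  Function.Bijective (gpRgHom A G)

/-- A commutative ring is connected if it is non-zero and `0`, `1` are its only idempotents. -/
def IsConnectedRing (R : Type*) [CommRing R] : Prop :=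
  Nontrivial R ∧ ∀ e : R, IsIdempotentElem e → e = 0 ∨ e = 1

/-- A grading of a commutative ring `R` by a (multiplicatively written) abelian group `Δ`:
a `Δ`-indexed internal direct sum decomposition of `R` into additive subgroups such that
`R_γ · R_δ ⊆ R_{γδ}`. -/
structure Grading (R : Type u) [CommRing R] (Δ : Type v) [CommGroup Δ] where
  comp : Δ → AddSubgroup R
  mul_mem : ∀ ⦃γ δ : Δ⦄ ⦃x y : R⦄, x ∈ comp γ → y ∈ comp δ → x * y ∈ comp (γ * δ)
  isInternal : letI := Classical.decEq Δ; DirectSum.IsInternal comp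

/-- A grading is universal if every grading of `R` is obtained from it by pushforward
(`S_ε = Σ_{δ ∈ f⁻¹(ε)} R_δ`) along a unique group homomorphism. -/
def Grading.IsUniversal {R : Type u} [CommRing R] {Δ : Type v} [CommGroup Δ]
    (g : Grading R Δ) : Prop :=
  ∀ (E : Type v) (_ : CommGroup E) (s : Grading R E),
    ∃! f : Δ →* E, ∀ ε : E, s.comp ε = ⨆ δ ∈ f ⁻¹' {ε}, g.comp δ

/-!
A decomposition `A[G] = R` is the same as a grading of `R` by `G` with `g ∈ R_g` for all `g ∈ G`,
where `A = R_1`. By universality such a grading is the pushforward along a unique `f : Γ → G`, and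
`g ∈ R_g` says that `f` is a left inverse of the degree map on `G`, whence `f ∘ d ∘ f = f` and
`G = f(Γ)`, `A = ⊕_{γ ∈ ker f} R_γ`.

Inclusions between such sums only see the degrees `γ` with `R_γ ≠ 0`. These generate `Γ` by
universality and are stable under multiplication by degrees of units, so that these inclusions
amount to inclusions of kernels.
-/

open DirectSum Pointwise

section AddSubgroup

variable {ι M : Type*} [AddCommGroup M] {A : ι → AddSubgroup M}

theorem isInternal_addSubgroup_iff_iSupIndep_and_iSup_eq_top {_ : DecidableEq ι} :
    IsInternal A ↔ iSupIndep A ∧ iSup A = ⊤ := by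
  let e : AddSubgroup M ≃o Submodule ℤ M := AddSubgroup.toIntSubmodule
  rw [← iSupIndep_map_orderIso_iff e, ← e.injective.eq_iff, e.map_iSup, e.map_top]
  exact isInternal_submodule_iff_iSupIndep_and_iSup_eq_top (e ∘ A)

theorem disjoint_biSup_addSubgroup_of_iSupIndep (hA : iSupIndep A) {s t : Set ι}
    (hst : Disjoint s t) : Disjoint (⨆ i ∈ s, A i) (⨆ i ∈ t, A i) := by
  let e : AddSubgroup M ≃o Submodule ℤ M := AddSubgroup.toIntSubmodule
  rw [← disjoint_map_orderIso_iff e]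
  simp only [e.map_iSup]
  exact ((iSupIndep_map_orderIso_iff e).2 hA).disjoint_biSup_biSup hst

theorem finite_ne_bot_of_iSupIndep_addSubgroup [IsNoetherian ℤ M] (hA : iSupIndep A) :
    {i | A i ≠ ⊥}.Finite := by
  let e : AddSubgroup M ≃o Submodule ℤ M := AddSubgroup.toIntSubmodule
  have hfin := WellFoundedGT.finite_ne_bot_of_iSupIndep ((iSupIndep_map_orderIso_iff e).2 hA)
  simpa only [Function.comp_apply, ne_eq, map_eq_bot_iff] using hfin

end AddSubgroup

/-- `f` is an outer inverse of `d` if `f ∘ d ∘ f = f`; these `f` form the set `Id₀(d)`. -/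
def IsOuterInverse {M N : Type*} [Group M] [Group N] (d : M →* N) (f : N →* M) : Prop :=
  ∀ n, f (d (f n)) = f n

namespace IsOuterInverse

variable {M N : Type*} [Group M] [Group N] {d : M →* N} {g : N →* M}

theorem range_le_range_iff (hg : IsOuterInverse d g) {f : N →* M} :
    f.range ≤ g.range ↔ ∀ n, g (d (f n)) = f n := by
  constructor
  · intro hfg n
    obtain ⟨m, hm⟩ := hfg ⟨n, rfl⟩
    rw [← hm, hg]
  · rintro hgf _ ⟨n, rfl⟩
    exact ⟨d (f n), hgf n⟩

theorem ker_le_ker_iff (hg : IsOuterInverse d g) {P : Type*} [Group P] {f : N →* P} :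
    g.ker ≤ f.ker ↔ ∀ n, f (d (g n)) = f n := by
  constructor
  · intro hgf n
    have hn : d (g n) / n ∈ g.ker := by simp [MonoidHom.mem_ker, hg n]
    exact div_eq_one.1 (map_div f _ _ ▸ hgf hn)
  · intro hfg n hn
    rw [MonoidHom.mem_ker, ← hfg, MonoidHom.mem_ker.1 hn, map_one, map_one]

end IsOuterInverse

namespace Grading

variable {R E : Type*} {Γ : Type v} [CommRing R] [CommGroup Γ] [CommGroup E] (gr : Grading R Γ)

theorem iSupIndep_comp : iSupIndep gr.comp :=
  (isInternal_addSubgroup_iff_iSupIndep_and_iSup_eq_top.1 gr.isInternal).1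

theorem iSup_comp : ⨆ γ, gr.comp γ = ⊤ :=
  (isInternal_addSubgroup_iff_iSupIndep_and_iSup_eq_top.1 gr.isInternal).2

/-- The sum `⊕_{γ ∈ S} R_γ` of the homogeneous components with degree in `S`. -/
def compOn (S : Set Γ) : AddSubgroup R := ⨆ γ ∈ S, gr.comp γ

/-- The set of degrees `γ` with `R_γ ≠ 0`. -/
def support : Set Γ := {γ | gr.comp γ ≠ ⊥}

variable {gr} {S T U : Set Γ} {γ δ : Γ} {x y : R}

theorem comp_le_compOn (hγ : γ ∈ S) : gr.comp γ ≤ gr.compOn S :=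
  le_biSup gr.comp hγ

theorem compOn_singleton : gr.compOn {γ} = gr.comp γ :=
  iSup_singleton

theorem compOn_mono (hST : S ⊆ T) : gr.compOn S ≤ gr.compOn T :=
  biSup_mono hST

theorem disjoint_compOn (hST : Disjoint S T) : Disjoint (gr.compOn S) (gr.compOn T) :=
  disjoint_biSup_addSubgroup_of_iSupIndep gr.iSupIndep_comp hST

theorem compOn_le_compOn_iff : gr.compOn S ≤ gr.compOn T ↔ S ∩ gr.support ⊆ T := by
  constructor
  · rintro hST γ ⟨hγS, hγ⟩
    by_contra hγT
    have hdisj : Disjoint (gr.comp γ) (gr.compOn T) :=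
      compOn_singleton (gr := gr) ▸ disjoint_compOn (Set.disjoint_singleton_left.2 hγT)
    exact hγ (hdisj.eq_bot_of_le ((comp_le_compOn hγS).trans hST))
  · intro hST
    refine iSup₂_le fun γ hγS => ?_
    by_cases hγ : gr.comp γ = ⊥
    · exact hγ ▸ bot_le
    · exact comp_le_compOn (hST ⟨hγS, hγ⟩)

theorem compOn_preimage_eq_of_eqOn_support {α : Type*} {f g : Γ → α}
    (hfg : Set.EqOn f g gr.support) (V : Set α) : gr.compOn (f ⁻¹' V) = gr.compOn (g ⁻¹' V) := by
  have hsupp : f ⁻¹' V ∩ gr.support = g ⁻¹' V ∩ gr.support := by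
    rw [Set.inter_comm, hfg.inter_preimage_eq, Set.inter_comm]
  exact le_antisymm (compOn_le_compOn_iff.2 (hsupp.subset.trans Set.inter_subset_left))
    (compOn_le_compOn_iff.2 (hsupp.superset.trans Set.inter_subset_left))

theorem mul_mem_compOn (hSTU : S * T ⊆ U) (hx : x ∈ gr.compOn S) (hy : y ∈ gr.compOn T) :
    x * y ∈ gr.compOn U := by
  suffices h : gr.compOn T ≤ (gr.compOn U).comap (AddMonoidHom.mulLeft x) from h hy
  refine iSup₂_le fun δ hδ z hz => ?_
  suffices h : gr.compOn S ≤ (gr.compOn U).comap (AddMonoidHom.mulRight z) from h hx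
  exact iSup₂_le fun γ hγ w hw =>
    comp_le_compOn (hSTU (Set.mul_mem_mul hγ hδ)) (gr.mul_mem hw hz)

theorem degree_eq_of_mem_of_mem (hx : x ≠ 0) (hγ : x ∈ gr.comp γ) (hδ : x ∈ gr.comp δ) :
    γ = δ := by
  by_contra hne
  exact hx (AddSubgroup.disjoint_def.1 (gr.iSupIndep_comp.pairwiseDisjoint hne) hγ hδ)

theorem mul_unit_mem_support (hγ : γ ∈ gr.support) {u : Rˣ} (hu : (u : R) ∈ gr.comp δ) :
    γ * δ ∈ gr.support := by
  refine fun hbot => hγ ((AddSubgroup.eq_bot_iff_forall _).2 fun x hx => ?_)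
  have hxu : x * u ∈ gr.comp (γ * δ) := gr.mul_mem hx hu
  rwa [hbot, AddSubgroup.mem_bot, Units.mul_left_eq_zero] at hxu

theorem finite_support [IsNoetherian ℤ R] : gr.support.Finite :=
  finite_ne_bot_of_iSupIndep_addSubgroup gr.iSupIndep_comp

variable (gr)

theorem one_mem_comp_one : (1 : R) ∈ gr.comp 1 := by
  have hsup : gr.comp 1 ⊔ gr.compOn {1}ᶜ = ⊤ :=
    (iSup_split_single gr.comp 1).symm.trans gr.iSup_comp
  obtain ⟨e, he, r, hr, her⟩ := AddSubgroup.mem_sup.1 (hsup ▸ AddSubgroup.mem_top (1 : R))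
  -- `x * r = x - x * e` has the degree of `x`, while `r` has no component of degree `1`.
  have homogeneous_mul_r (γ : Γ) (x : R) (hx : x ∈ gr.comp γ) : x * r = 0 := by
    have hγ : x * r ∈ gr.comp γ := by
      have hxr : x * r = x - x * e := by rw [eq_sub_iff_add_eq', ← mul_add, her, mul_one]
      exact hxr ▸ sub_mem hx (mul_one γ ▸ gr.mul_mem hx he)
    have hγc : x * r ∈ gr.compOn {γ}ᶜ := by
      refine mul_mem_compOn ?_ (comp_le_compOn (Set.mem_singleton γ) hx) hr
      rintro _ ⟨_, rfl, δ, hδ, rfl⟩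
      simpa using hδ
    exact AddSubgroup.disjoint_def.1 (gr.iSupIndep_comp γ) hγ hγc
  have hr0 : (1 : R) ∈ (AddMonoidHom.mulRight r).ker :=
    (gr.iSup_comp.ge.trans (iSup_le homogeneous_mul_r)) (AddSubgroup.mem_top 1)
  rw [AddMonoidHom.mem_ker, AddMonoidHom.mulRight_apply, one_mul] at hr0
  rwa [← her, hr0, add_zero]

/-- The component `R_1` of trivial degree, as a subring. -/
def subringOne : Subring R where
  __ := gr.comp 1
  one_mem' := gr.one_mem_comp_one
  mul_mem' hx hy := mul_one (1 : Γ) ▸ gr.mul_mem hx hy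

theorem coe_subringOne : (gr.subringOne : Set R) = gr.comp 1 :=
  rfl

/-- The pushforward of a grading along `f : Γ →* E`, with `S_ε = ⊕_{δ ∈ f⁻¹(ε)} R_δ`. -/
def map (f : Γ →* E) : Grading R E where
  comp ε := gr.compOn (f ⁻¹' {ε})
  mul_mem _ _ _ _ := mul_mem_compOn <| by
    rintro _ ⟨_, rfl, _, rfl, rfl⟩
    exact map_mul f _ _
  isInternal := by
    refine isInternal_addSubgroup_iff_iSupIndep_and_iSup_eq_top.2 ⟨fun ε => ?_, ?_⟩
    · refine (disjoint_compOn disjoint_compl_right).mono_right (iSup₂_le fun ε' hε' => ?_)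
      exact compOn_mono fun γ hγ => ne_of_eq_of_ne hγ hε'
    · rw [eq_top_iff, ← gr.iSup_comp]
      exact iSup_le fun γ => le_iSup_of_le (f γ) (comp_le_compOn rfl)

theorem map_comp_one (f : Γ →* E) : (gr.map f).comp 1 = gr.compOn f.ker := by
  rw [MonoidHom.coe_ker]
  rfl

variable {gr}

theorem mem_map_comp {f : Γ →* E} (hx : x ∈ gr.comp γ) : x ∈ (gr.map f).comp (f γ) :=
  comp_le_compOn (gr := gr) (S := f ⁻¹' {f γ}) (Set.mem_singleton (f γ)) hx

theorem IsUniversal.closure_support_eq_top (hgr : gr.IsUniversal) :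
    Subgroup.closure gr.support = ⊤ := by
  let H := Subgroup.closure gr.support
  have heqOn : Set.EqOn (1 : Γ →* Γ ⧸ H) (QuotientGroup.mk' H) gr.support := fun γ hγ =>
    ((QuotientGroup.eq_one_iff γ).2 (Subgroup.subset_closure hγ)).symm
  have hmk : QuotientGroup.mk' H = 1 :=
    (hgr (Γ ⧸ H) inferInstance (gr.map 1)).unique
      (fun ε => compOn_preimage_eq_of_eqOn_support heqOn {ε}) (fun _ => rfl)
  calc H = (QuotientGroup.mk' H).ker := (QuotientGroup.ker_mk' H).symm
    _ = ⊤ := by rw [hmk, MonoidHom.ker_one]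

theorem IsUniversal.exists_comp_eq_map_comp [Small.{v} E] (hgr : gr.IsUniversal)
    (s : Grading R E) : ∃ F : Γ →* E, ∀ ε, s.comp ε = (gr.map F).comp ε := by
  let e : E ≃* Shrink.{v} E := Shrink.mulEquiv.symm
  obtain ⟨F, hF, -⟩ := hgr (Shrink.{v} E) inferInstance (s.map e.toMonoidHom)
  refine ⟨e.symm.toMonoidHom.comp F, fun ε => ?_⟩
  calc s.comp ε = s.compOn (e ⁻¹' {e ε}) := by
        rw [← Set.image_singleton, e.injective.preimage_image, compOn_singleton]
    _ = gr.compOn (F ⁻¹' {e ε}) := hF (e ε)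
    _ = gr.compOn (e.symm.toMonoidHom.comp F ⁻¹' {ε}) := by
        congr 1
        ext γ
        exact e.symm_apply_eq.symm

end Grading

section GroupRing

variable {R : Type*} [CommRing R] {A : Subring R} {G : Subgroup Rˣ}

theorem isGpRg_iff_isInternal {_ : DecidableEq G} :
    IsGpRg A G ↔ IsInternal fun g : G => ((g : Rˣ) : R) • A.toAddSubgroup := by
  classical
  let e : MonoidAlgebra A G ≃+ ⨁ g : G, (((g : Rˣ) : R) • A.toAddSubgroup : AddSubgroup R) :=
    MonoidAlgebra.coeffAddEquiv.trans <| finsuppAddEquivDFinsupp.trans <|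
      DFinsupp.mapRange.addEquiv fun g : G =>
        (DistribMulAction.toAddEquiv R (g : Rˣ)).addSubgroupMap A.toAddSubgroup
  have he : gpRgHom A G = DirectSum.coeAddMonoidHom _ ∘ e := by
    funext x
    induction x using MonoidAlgebra.induction_linear with
    | zero => simp
    | add x y hx hy => simp_all
    | single g a =>
      have he_single : e (MonoidAlgebra.single g a) =
          DirectSum.of (fun g : G => (((g : Rˣ) : R) • A.toAddSubgroup : AddSubgroup R)) g
            ⟨((g : Rˣ) : R) • (a : R), a, a.2, rfl⟩ := by
        change DFinsupp.mapRange _ (fun _ => map_zero _) (Finsupp.single g a).toDFinsupp = _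
        rw [Finsupp.toDFinsupp_single, DFinsupp.mapRange_single]
        rfl
      simp [he_single, gpRgHom, mul_comm]
  rw [IsGpRg, he]
  exact Function.Bijective.of_comp_iff _ e.bijective

theorem Grading.isGpRg_subringOne (s : Grading R G) (hs : ∀ g : G, ((g : Rˣ) : R) ∈ s.comp g) :
    IsGpRg s.subringOne G := by
  have hcomp (g : G) : ((g : Rˣ) : R) • s.subringOne.toAddSubgroup = s.comp g := by
    ext x
    constructor
    · rintro ⟨a, ha, rfl⟩
      simpa using s.mul_mem (hs g) ha
    · intro hx
      have hgx : ((g⁻¹ : G) : Rˣ) * x ∈ s.comp 1 := by simpa using s.mul_mem (hs g⁻¹) hx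
      exact ⟨_, hgx, Units.mul_inv_cancel_left (g : Rˣ) x⟩
  rw [isGpRg_iff_isInternal, funext hcomp]
  exact s.isInternal

namespace IsGpRg

/-- The grading of `A[G] = R` by `G`, with `R_g = g A`. -/
def grading (h : IsGpRg A G) : Grading R G where
  comp g := ((g : Rˣ) : R) • A.toAddSubgroup
  mul_mem := by
    rintro g g' _ _ ⟨a, ha, rfl⟩ ⟨b, hb, rfl⟩
    exact ⟨a * b, A.mul_mem ha hb, (smul_mul_smul_comm ((g : Rˣ) : R) a ((g' : Rˣ) : R) b).symm⟩
  isInternal := isGpRg_iff_isInternal.1 h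

theorem coe_mem_grading_comp (h : IsGpRg A G) (g : G) : ((g : Rˣ) : R) ∈ h.grading.comp g :=
  ⟨1, A.one_mem, mul_one _⟩

theorem grading_comp_one (h : IsGpRg A G) : h.grading.comp 1 = A.toAddSubgroup :=
  one_smul _ _

theorem finite [Module.Finite ℤ R] (h : IsGpRg A G) : Finite G := by
  cases subsingleton_or_nontrivial R
  · infer_instance
  · have hsupp : h.grading.support = Set.univ := Set.eq_univ_of_forall fun g hg =>
      (g : Rˣ).ne_zero ((AddSubgroup.eq_bot_iff_forall _).1 hg _ (h.coe_mem_grading_comp g))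
    exact Set.finite_univ_iff.1 (hsupp ▸ Grading.finite_support)

theorem le_torsion [Module.Finite ℤ R] (h : IsGpRg A G) : G ≤ CommGroup.torsion Rˣ := fun u hu =>
  have := h.finite
  G.subtype.isOfFinOrder (isOfFinOrder_of_finite (⟨u, hu⟩ : G))

end IsGpRg

end GroupRing

section DegreeMap

variable {R : Type*} {Γ : Type v} [CommRing R] [CommGroup Γ] {gr : Grading R Γ}
  {U : Subgroup Rˣ} {d : U →* Γ}

theorem IsOuterInverse.exists_isGpRg (hd : ∀ ζ : U, ((ζ : Rˣ) : R) ∈ gr.comp (d ζ))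
    {f : Γ →* U} (hf : IsOuterInverse d f) :
    ∃ A : Subring R, (A : Set R) = gr.compOn f.ker ∧ IsGpRg A (f.range.map U.subtype) := by
  rw [MonoidHom.map_range]
  let φ : Γ →* (U.subtype.comp f).range := (U.subtype.comp f).rangeRestrict
  refine ⟨(gr.map φ).subringOne, ?_, (gr.map φ).isGpRg_subringOne ?_⟩
  · rw [Grading.coe_subringOne, Grading.map_comp_one, MonoidHom.ker_rangeRestrict,
      MonoidHom.ker_comp_of_injective f U.subtype U.subtype_injective]
  · rintro ⟨_, γ, rfl⟩
    have hφ : φ (d (f γ)) = φ γ := Subtype.ext (congrArg U.subtype (hf γ))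
    change _ ∈ (gr.map φ).comp (φ γ)
    rw [← hφ]
    exact Grading.mem_map_comp (hd (f γ))

theorem Grading.IsUniversal.compOn_ker_le_compOn_ker_iff (hgr : gr.IsUniversal)
    (hd : ∀ ζ : U, ((ζ : Rˣ) : R) ∈ gr.comp (d ζ)) {g : Γ →* U} (hg : IsOuterInverse d g)
    {P : Type*} [Group P] {f : Γ →* P} :
    gr.compOn g.ker ≤ gr.compOn f.ker ↔ g.ker ≤ f.ker := by
  refine ⟨fun hgf => hg.ker_le_ker_iff.2 ?_, Grading.compOn_mono⟩
  suffices heqOn : Set.EqOn (f.comp (d.comp g)) f gr.support from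
    DFunLike.congr_fun (MonoidHom.eq_of_eqOn_dense hgr.closure_support_eq_top heqOn)
  intro γ hγ
  have hker : γ * d (g γ)⁻¹ ∈ g.ker := by simp [MonoidHom.mem_ker, hg γ]
  have hsupp : γ * d (g γ)⁻¹ ∈ gr.support := Grading.mul_unit_mem_support hγ (hd (g γ)⁻¹)
  have hf : f (γ * d (g γ)⁻¹) = 1 := Grading.compOn_le_compOn_iff.1 hgf ⟨hker, hsupp⟩
  rw [map_mul, map_inv, map_inv, mul_inv_eq_one] at hf
  exact hf.symm

theorem Grading.IsUniversal.comp_eq_and_comp_eq_iff (hgr : gr.IsUniversal)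
    (hd : ∀ ζ : U, ((ζ : Rˣ) : R) ∈ gr.comp (d ζ)) {f g : Γ →* U} (hg : IsOuterInverse d g) :
    (∀ γ, f (d (g γ)) = f γ) ∧ (∀ γ, g (d (f γ)) = f γ) ↔
      f.range.map U.subtype ≤ g.range.map U.subtype ∧
        gr.compOn g.ker ≤ gr.compOn f.ker := by
  rw [Subgroup.map_subtype_le_map_subtype, hg.range_le_range_iff,
    hgr.compOn_ker_le_compOn_ker_iff hd hg, hg.ker_le_ker_iff, and_comm]

theorem IsGpRg.hom_apply_eq_of_mem_comp {A : Subring R} {G : Subgroup Rˣ}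
    (h : IsGpRg A G) {F : Γ →* G} (hF : ∀ g, h.grading.comp g = (gr.map F).comp g)
    {γ : Γ} {g : G} (hg : ((g : Rˣ) : R) ∈ gr.comp γ) : F γ = g := by
  cases subsingleton_or_nontrivial R
  · exact Subsingleton.elim _ _
  · refine Grading.degree_eq_of_mem_of_mem (gr := h.grading) (g : Rˣ).ne_zero ?_
      (h.coe_mem_grading_comp g)
    exact hF (F γ) ▸ Grading.mem_map_comp hg

theorem IsGpRg.exists_isOuterInverse (hgr : gr.IsUniversal)
    (hd : ∀ ζ : U, ((ζ : Rˣ) : R) ∈ gr.comp (d ζ)) {A : Subring R} {G : Subgroup Rˣ}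
    [Small.{v} G] (h : IsGpRg A G) (hGU : G ≤ U) :
    ∃ f : Γ →* U, IsOuterInverse d f ∧ (A : Set R) = gr.compOn f.ker ∧
      G = f.range.map U.subtype := by
  obtain ⟨F, hF⟩ := hgr.exists_comp_eq_map_comp h.grading
  let f : Γ →* U := (Subgroup.inclusion hGU).comp F
  have hdegree (g : G) : F (d (Subgroup.inclusion hGU g)) = g :=
    h.hom_apply_eq_of_mem_comp hF (hd _)
  refine ⟨f, fun γ => congrArg (Subgroup.inclusion hGU) (hdegree (F γ)), ?_, ?_⟩
  · rw [MonoidHom.ker_comp_of_injective _ _ (Subgroup.inclusion_injective hGU),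
      ← Grading.map_comp_one, ← hF, h.grading_comp_one, Subring.coe_toAddSubgroup]
  · have hFsurj : F.range = ⊤ := MonoidHom.range_eq_top.2 fun g => ⟨_, hdegree g⟩
    calc G = F.range.map G.subtype := by
          rw [hFsurj, ← MonoidHom.range_eq_map, Subgroup.range_subtype]
      _ = f.range.map U.subtype := by
          rw [MonoidHom.map_range, MonoidHom.map_range]
          rfl

end DegreeMap

theorem id0_equiv_gpRg_general {R : Type*} {Γ : Type v} [CommRing R] [Module.Finite ℤ R]
    [CommGroup Γ] {gr : Grading R Γ} (hgr : gr.IsUniversal) {d : CommGroup.torsion Rˣ →* Γ}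
    (hd : ∀ ζ : CommGroup.torsion Rˣ, ((ζ : Rˣ) : R) ∈ gr.comp (d ζ)) :
    (∀ f : Γ →* CommGroup.torsion Rˣ, IsOuterInverse d f →
      ∃ A : Subring R, (A : Set R) = gr.compOn f.ker ∧
        IsGpRg A (f.range.map (CommGroup.torsion Rˣ).subtype)) ∧
    (∀ f g : Γ →* CommGroup.torsion Rˣ, IsOuterInverse d f → IsOuterInverse d g →
      gr.compOn f.ker = gr.compOn g.ker →
      f.range.map (CommGroup.torsion Rˣ).subtype = g.range.map (CommGroup.torsion Rˣ).subtype →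
      f = g) ∧
    (∀ (A : Subring R) (G : Subgroup Rˣ), IsGpRg A G →
      ∃ f : Γ →* CommGroup.torsion Rˣ, IsOuterInverse d f ∧ (A : Set R) = gr.compOn f.ker ∧
        G = f.range.map (CommGroup.torsion Rˣ).subtype) ∧
    (∀ f g : Γ →* CommGroup.torsion Rˣ, IsOuterInverse d f → IsOuterInverse d g →
      (((∀ γ, f (d (g γ)) = f γ) ∧ (∀ γ, g (d (f γ)) = f γ)) ↔
        f.range.map (CommGroup.torsion Rˣ).subtype ≤ g.range.map (CommGroup.torsion Rˣ).subtype ∧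
          gr.compOn g.ker ≤ gr.compOn f.ker)) := by
  refine ⟨fun f => IsOuterInverse.exists_isGpRg hd, fun f g hf hg hcomp hrange => ?_,
    fun A G h => ?_, fun f g _ => hgr.comp_eq_and_comp_eq_iff hd⟩
  · have hfg := (hgr.comp_eq_and_comp_eq_iff hd hg).2 ⟨hrange.le, hcomp.ge⟩
    have hgf := (hgr.comp_eq_and_comp_eq_iff hd hf).2 ⟨hrange.ge, hcomp.le⟩
    exact MonoidHom.ext fun γ => (hfg.2 γ).symm.trans (hgf.1 γ)
  · have := h.finite
    exact h.exists_isOuterInverse hgr hd h.le_torsion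

/-- Let `R` be a connected reduced order with universal grading
`(Γ, (R_γ))` and degree map `d : μ(R) → Γ`. The map `Φ` sending
`f ∈ Id₀(d) = {f ∈ Hom(Γ, μ(R)) : f∘d∘f = f}` to `(⊕_{γ ∈ ker f} R_γ, f(Γ))` is well
defined (its values lie in `GpRg(R)`) and is an isomorphism of partially ordered sets from
`Id₀(d)` (ordered by `f ≤ g ↔ f∘d∘g = f ∧ g∘d∘f = f`) onto `GpRg(R)` (ordered by
`(B,H) ≤ (A,G) ↔ H ⊆ G ∧ B ⊇ A`). -/
theorem id0_equiv_gpRg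
    {R : Type u} [CommRing R] [Module.Free ℤ R] [Module.Finite ℤ R] [IsReduced R]
    (hconn : IsConnectedRing R)
    {Γ : Type v} [CommGroup Γ] (gr : Grading R Γ) (hgr : gr.IsUniversal)
    (d : CommGroup.torsion Rˣ →* Γ)
    (hd : ∀ ζ : CommGroup.torsion Rˣ, ((ζ : Rˣ) : R) ∈ gr.comp (d ζ)) :
    -- well-definedness: each `f ∈ Id₀(d)` yields an element `Φ(f) ∈ GpRg(R)`
    (∀ f : Γ →* CommGroup.torsion Rˣ, (∀ γ, f (d (f γ)) = f γ) →
      ∃ A : Subring R,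
        (A : Set R) = ((⨆ γ ∈ f.ker, gr.comp γ : AddSubgroup R) : Set R) ∧
        IsGpRg A (Subgroup.map (CommGroup.torsion Rˣ).subtype f.range)) ∧
    -- injectivity of `Φ`
    (∀ f g : Γ →* CommGroup.torsion Rˣ,
      (∀ γ, f (d (f γ)) = f γ) → (∀ γ, g (d (g γ)) = g γ) →
      (⨆ γ ∈ f.ker, gr.comp γ : AddSubgroup R) = (⨆ γ ∈ g.ker, gr.comp γ : AddSubgroup R) →
      Subgroup.map (CommGroup.torsion Rˣ).subtype f.range =
        Subgroup.map (CommGroup.torsion Rˣ).subtype g.range →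
      f = g) ∧
    -- surjectivity of `Φ` onto `GpRg(R)`
    (∀ (A : Subring R) (G : Subgroup Rˣ), IsGpRg A G →
      ∃ f : Γ →* CommGroup.torsion Rˣ, (∀ γ, f (d (f γ)) = f γ) ∧
        (A : Set R) = ((⨆ γ ∈ f.ker, gr.comp γ : AddSubgroup R) : Set R) ∧
        G = Subgroup.map (CommGroup.torsion Rˣ).subtype f.range) ∧
    -- `Φ` and its inverse are order preserving
    (∀ f g : Γ →* CommGroup.torsion Rˣ,
      (∀ γ, f (d (f γ)) = f γ) → (∀ γ, g (d (g γ)) = g γ) →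
      (((∀ γ, f (d (g γ)) = f γ) ∧ (∀ γ, g (d (f γ)) = f γ)) ↔
        (Subgroup.map (CommGroup.torsion Rˣ).subtype f.range ≤
            Subgroup.map (CommGroup.torsion Rˣ).subtype g.range ∧
          (⨆ γ ∈ g.ker, gr.comp γ : AddSubgroup R) ≤
            (⨆ γ ∈ f.ker, gr.comp γ : AddSubgroup R)))) :=
  id0_equiv_gpRg_general hgr hd
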